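/- Let K ⊂ ℝ² be a centrally symmetric compact convex polygon that is a Minkowski sum of segments (a zonotope) K = Σ_{i=1}^m λ_i [−u_i, u_i] with λ_i ≥ 0. Then ∫_K |s|² ds is a polynomial in (λ₁,…,λ_m) with nonnegative coefficients. -/

import Mathlib

open Pointwise MeasureTheory

/-- The real function `f` agrees on the nonnegative orthant with a polynomial whose coefficients
are all nonnegative. -/
def IsNonnegPoly {σ : Type*} (f : (σ → ℝ) → ℝ) : Prop :=
  ∃ p : MvPolynomial σ ℝ, (∀ n, 0 ≤ MvPolynomial.coeff n p) ∧
    ∀ l : σ → ℝ, (∀ i, 0 ≤ l i) → f l = MvPolynomial.eval l p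

/-- The polynomials with nonnegative coefficients. -/
def nonnegCoeffs (σ : Type*) : Subsemiring (MvPolynomial σ ℝ) where
  carrier := {p | ∀ n, 0 ≤ MvPolynomial.coeff n p}
  mul_mem' {p q} hp hq n := by
    classical
    rw [MvPolynomial.coeff_mul]
    exact Finset.sum_nonneg fun x _ => mul_nonneg (hp _) (hq _)
  one_mem' n := by
    classical
    rw [MvPolynomial.coeff_one]
    split_ifs <;> norm_num
  add_mem' {p q} hp hq n := by
    rw [MvPolynomial.coeff_add]
    exact add_nonneg (hp n) (hq n)
  zero_mem' n := by simp

theorem C_mem_nonnegCoeffs {σ : Type*} {a : ℝ} (ha : 0 ≤ a) :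
    MvPolynomial.C a ∈ nonnegCoeffs σ := fun n => by
  classical
  rw [MvPolynomial.coeff_C]
  split_ifs
  exacts [ha, le_rfl]

theorem X_mem_nonnegCoeffs {σ : Type*} (i : σ) :
    (MvPolynomial.X i : MvPolynomial σ ℝ) ∈ nonnegCoeffs σ := fun n => by
  classical
  rw [MvPolynomial.coeff_X]
  split_ifs <;> norm_num

theorem eval_nonneg_of_mem_nonnegCoeffs {σ : Type*} {p : MvPolynomial σ ℝ}
    (hp : p ∈ nonnegCoeffs σ) {l : σ → ℝ} (hl : ∀ i, 0 ≤ l i) : 0 ≤ MvPolynomial.eval l p := by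
  rw [MvPolynomial.eval_eq]
  exact Finset.sum_nonneg fun d _ =>
    mul_nonneg (hp d) (Finset.prod_nonneg fun i _ => pow_nonneg (hl i) _)

theorem bind₁_mem_nonnegCoeffs {σ τ : Type*} {p : MvPolynomial τ ℝ} (hp : p ∈ nonnegCoeffs τ)
    {g : τ → MvPolynomial σ ℝ} (hg : ∀ i, g i ∈ nonnegCoeffs σ) :
    MvPolynomial.bind₁ g p ∈ nonnegCoeffs σ := by
  rw [MvPolynomial.bind₁, MvPolynomial.aeval_def, MvPolynomial.eval₂_eq]
  exact Subsemiring.sum_mem _ fun d _ => Subsemiring.mul_mem _ (C_mem_nonnegCoeffs (hp d))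
    (Subsemiring.prod_mem _ fun i _ => Subsemiring.pow_mem _ (hg i) _)

namespace IsNonnegPoly

variable {σ : Type*} {f g : (σ → ℝ) → ℝ}

theorem congr (hf : IsNonnegPoly f) (h : ∀ l, (∀ i, 0 ≤ l i) → g l = f l) : IsNonnegPoly g := by
  obtain ⟨p, hp, e⟩ := hf
  exact ⟨p, hp, fun l hl => (h l hl).trans (e l hl)⟩

theorem const {a : ℝ} (ha : 0 ≤ a) : IsNonnegPoly fun _ : σ → ℝ => a :=
  ⟨MvPolynomial.C a, C_mem_nonnegCoeffs ha, fun l _ => by simp⟩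

theorem coord (i : σ) : IsNonnegPoly fun l : σ → ℝ => l i :=
  ⟨MvPolynomial.X i, X_mem_nonnegCoeffs i, fun l _ => by simp⟩

theorem add (hf : IsNonnegPoly f) (hg : IsNonnegPoly g) : IsNonnegPoly fun l => f l + g l := by
  obtain ⟨p, hp, ep⟩ := hf
  obtain ⟨q, hq, eq⟩ := hg
  exact ⟨p + q, (nonnegCoeffs σ).add_mem hp hq, fun l hl => by simp [ep l hl, eq l hl]⟩

theorem mul (hf : IsNonnegPoly f) (hg : IsNonnegPoly g) : IsNonnegPoly fun l => f l * g l := by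
  obtain ⟨p, hp, ep⟩ := hf
  obtain ⟨q, hq, eq⟩ := hg
  exact ⟨p * q, (nonnegCoeffs σ).mul_mem hp hq, fun l hl => by simp [ep l hl, eq l hl]⟩

theorem pow (hf : IsNonnegPoly f) (n : ℕ) : IsNonnegPoly fun l => f l ^ n := by
  obtain ⟨p, hp, ep⟩ := hf
  exact ⟨p ^ n, (nonnegCoeffs σ).pow_mem hp n, fun l hl => by simp [ep l hl]⟩

theorem sum {ι : Type*} {s : Finset ι} {f : ι → (σ → ℝ) → ℝ}
    (hf : ∀ i ∈ s, IsNonnegPoly (f i)) : IsNonnegPoly fun l => ∑ i ∈ s, f i l := by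
  classical
  induction s using Finset.induction_on with
  | empty => simpa using const le_rfl
  | insert a s ha ih =>
    simp only [Finset.sum_insert ha]
    exact (hf a (by simp)).add (ih fun i hi => hf i (by simp [hi]))

theorem comp {τ : Type*} {f : (τ → ℝ) → ℝ} (hf : IsNonnegPoly f) {g : τ → (σ → ℝ) → ℝ}
    (hg : ∀ i, IsNonnegPoly (g i)) : IsNonnegPoly fun l => f fun i => g i l := by
  obtain ⟨p, hp, ep⟩ := hf
  choose q hq eq using hg
  refine ⟨MvPolynomial.bind₁ q p, bind₁_mem_nonnegCoeffs hp hq, fun l hl => ?_⟩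
  have hgl : (fun i => g i l) = fun i => MvPolynomial.eval l (q i) := funext fun i => eq i l hl
  simp only
  rw [hgl, ep _ fun i => eval_nonneg_of_mem_nonnegCoeffs (hq i) hl]
  simp only [← MvPolynomial.coe_aeval_eq_eval]
  exact (MvPolynomial.aeval_bind₁ ..).symm

end IsNonnegPoly

/-- The unit vector of the plane in the direction `θ`. -/
noncomputable def unitVec (θ : ℝ) : ℂ := ⟨Real.cos θ, Real.sin θ⟩

/-- The zonotope generated by the segments `[-l i, l i]` in the directions `θ i`. -/
noncomputable def zonotope {m : ℕ} (θ l : Fin m → ℝ) : Set ℂ :=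
  ∑ i, segment ℝ (-(l i • unitVec (θ i))) (l i • unitVec (θ i))

theorem zonotope_succ {m : ℕ} (θ l : Fin (m + 1) → ℝ) :
    zonotope θ l = zonotope (fun i => θ i.castSucc) (fun i => l i.castSucc) +
      segment ℝ (-(l (Fin.last m) • unitVec (θ (Fin.last m))))
        (l (Fin.last m) • unitVec (θ (Fin.last m))) :=
  Fin.sum_univ_castSucc _

theorem mem_segment_neg_iff {E : Type*} [AddCommGroup E] [Module ℝ E] {a : ℝ} (ha : 0 ≤ a)
    {e z : E} : z ∈ segment ℝ (-(a • e)) (a • e) ↔ ∃ t, |t| ≤ a ∧ z = t • e := by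
  rw [segment_eq_image']
  constructor
  · rintro ⟨s, ⟨hs0, hs1⟩, rfl⟩
    refine ⟨(2 * s - 1) * a, abs_le.2 ⟨by nlinarith, by nlinarith⟩, ?_⟩
    module
  · rintro ⟨t, ht, rfl⟩
    obtain ⟨h1, h2⟩ := abs_le.1 ht
    rcases ha.eq_or_lt with rfl | ha
    · obtain rfl : t = 0 := by linarith
      exact ⟨0, by simp, by simp⟩
    · refine ⟨(t / a + 1) / 2, ⟨?_, ?_⟩, ?_⟩
      · have : -1 ≤ t / a := by rw [le_div_iff₀ ha]; linarith
        linarith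
      · have : t / a ≤ 1 := by rw [div_le_iff₀ ha]; linarith
        linarith
      · have : t = t / a * a := by field_simp
        conv_rhs => rw [this]
        module

theorem convex_zonotope {m : ℕ} (θ l : Fin m → ℝ) : Convex ℝ (zonotope θ l) := by
  induction m with
  | zero => rw [zonotope, Finset.univ_eq_empty, Finset.sum_empty]; exact convex_singleton 0
  | succ m ih => rw [zonotope_succ]; exact (ih _ _).add (convex_segment _ _)

theorem isCompact_zonotope {m : ℕ} (θ l : Fin m → ℝ) : IsCompact (zonotope θ l) := by
  induction m with
  | zero => simp [zonotope]
  | succ m ih =>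
    rw [zonotope_succ]
    refine (ih _ _).add ?_
    rw [segment_eq_image']
    exact isCompact_Icc.image (by fun_prop)

theorem neg_zonotope {m : ℕ} (θ l : Fin m → ℝ) : -zonotope θ l = zonotope θ l := by
  induction m with
  | zero => simp [zonotope]
  | succ m ih =>
    rw [zonotope_succ, neg_add, ih]
    congr 1
    have h := image_segment ℝ (LinearMap.toAffineMap (-LinearMap.id : ℂ →ₗ[ℝ] ℂ))
      (-(l (Fin.last m) • unitVec (θ (Fin.last m)))) (l (Fin.last m) • unitVec (θ (Fin.last m)))
    simp only [LinearMap.coe_toAffineMap, LinearMap.neg_apply, LinearMap.id_apply, neg_neg] at h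
    rw [← Set.image_neg_eq_neg, h, segment_symm]

/-- The set `K` has horizontal extent `[-X, X]`, over which its upper boundary is the graph
of the continuous function `U`. -/
structure UpperProfile (K : Set ℂ) (X : ℝ) (U : ℝ → ℝ) : Prop where
  nonneg : 0 ≤ X
  cont : Continuous U
  abs_re_le : ∀ z ∈ K, |z.re| ≤ X
  mem : ∀ x, |x| ≤ X → (⟨x, U x⟩ : ℂ) ∈ K
  le : ∀ z ∈ K, z.im ≤ U z.re

/-- On `[-X, X]` the slopes of `U` are at most that of the direction `φ`. -/
def SlopeLE (U : ℝ → ℝ) (X φ : ℝ) : Prop :=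
  ∀ x y, -X ≤ x → x ≤ y → y ≤ X → Real.cos φ * (U y - U x) ≤ Real.sin φ * (y - x)

/-- The upper boundary function obtained from `U` by adding the segment `[-a, a]` in the
direction `θ`, which is steeper than the graph of `U`. -/
noncomputable def addSlope (U : ℝ → ℝ) (X θ a : ℝ) (x : ℝ) : ℝ :=
  U (max (x - a * Real.cos θ) (-X)) + Real.tan θ * (min (x - a * Real.cos θ) (-X) + X) +
    a * Real.sin θ

section addSlope

variable {K : Set ℂ} {X θ a : ℝ} {U : ℝ → ℝ}

theorem addSlope_of_le {x : ℝ} (hθ : 0 < Real.cos θ) (hx : x ≤ -X + a * Real.cos θ) :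
    addSlope U X θ a x = U (-X) + Real.tan θ * (x + X) := by
  rw [addSlope, max_eq_right (by linarith), min_eq_left (by linarith), Real.tan_eq_sin_div_cos]
  field_simp
  ring

theorem addSlope_of_ge {x : ℝ} (hx : -X + a * Real.cos θ ≤ x) :
    addSlope U X θ a x = U (x - a * Real.cos θ) + a * Real.sin θ := by
  rw [addSlope, max_eq_left (by linarith), min_eq_right (by linarith)]
  ring

theorem UpperProfile.add_slope (hU : UpperProfile K X U) (hθ : 0 < Real.cos θ)
    (hs : SlopeLE U X θ) (ha : 0 ≤ a) :
    UpperProfile (K + segment ℝ (-(a • unitVec θ)) (a • unitVec θ)) (X + a * Real.cos θ)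
      (addSlope U X θ a) where
  nonneg := by have := hU.nonneg; positivity
  cont := by have := hU.cont; unfold addSlope; fun_prop
  abs_re_le := by
    rintro _ ⟨k, hk, z, hz, rfl⟩
    obtain ⟨t, ht, rfl⟩ := (mem_segment_neg_iff ha).1 hz
    have h1 := abs_le.1 (hU.abs_re_le k hk)
    have h2 := abs_le.1 ht
    simp only [unitVec, Complex.add_re, Complex.real_smul, Complex.re_ofReal_mul]
    exact abs_le.2 ⟨by nlinarith, by nlinarith⟩
  mem x hx := by
    obtain ⟨hx1, hx2⟩ := abs_le.1 hx
    rcases le_total x (-X + a * Real.cos θ) with h | h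
    · rw [addSlope_of_le hθ h]
      refine ⟨⟨-X, U (-X)⟩, hU.mem _ (by rw [abs_neg, abs_of_nonneg hU.nonneg]),
        ((x + X) / Real.cos θ) • unitVec θ, (mem_segment_neg_iff ha).2 ⟨_, ?_, rfl⟩, ?_⟩
      · rw [abs_le, le_div_iff₀ hθ, div_le_iff₀ hθ]
        constructor <;> linarith
      · apply Complex.ext
        · simp [unitVec, Complex.real_smul, -Complex.ofReal_div, -Complex.ofReal_add]
          field_simp
          ring
        · simp [unitVec, Complex.real_smul, -Complex.ofReal_div, -Complex.ofReal_add,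
            Real.tan_eq_sin_div_cos]
          field_simp
    · rw [addSlope_of_ge h]
      refine ⟨⟨x - a * Real.cos θ, U (x - a * Real.cos θ)⟩,
        hU.mem _ (abs_le.2 ⟨by linarith, by linarith⟩),
        a • unitVec θ, (mem_segment_neg_iff ha).2 ⟨_, (abs_of_nonneg ha).le, rfl⟩, ?_⟩
      apply Complex.ext <;> simp [unitVec, Complex.real_smul]
  le := by
    rintro _ ⟨k, hk, z, hz, rfl⟩
    obtain ⟨t, ht, rfl⟩ := (mem_segment_neg_iff ha).1 hz
    have h1 := abs_le.1 (hU.abs_re_le k hk)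
    have h2 := abs_le.1 ht
    have h3 := hU.le k hk
    simp only [unitVec, Complex.add_re, Complex.real_smul, Complex.re_ofReal_mul,
      Complex.add_im, Complex.im_ofReal_mul]
    rcases le_total (k.re + t * Real.cos θ) (-X + a * Real.cos θ) with h | h
    · rw [addSlope_of_le hθ h]
      have h4 := hs (-X) k.re le_rfl h1.1 h1.2
      have h5 : U k.re - U (-X) ≤ Real.tan θ * (k.re + X) := by
        rw [Real.tan_eq_sin_div_cos, div_mul_eq_mul_div, le_div_iff₀ hθ]
        linarith
      have h6 : Real.tan θ * Real.cos θ = Real.sin θ := Real.tan_mul_cos hθ.ne'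
      linear_combination h3 + h5 - t * h6
    · rw [addSlope_of_ge h]
      have h4 := hs (k.re + t * Real.cos θ - a * Real.cos θ) k.re (by linarith)
        (by nlinarith) h1.2
      have h5 : U k.re - U (k.re + t * Real.cos θ - a * Real.cos θ) ≤ Real.sin θ * (a - t) := by
        refine le_of_mul_le_mul_left ?_ hθ
        linarith
      linarith

theorem SlopeLE.addSlope {φ : ℝ} (hs : SlopeLE U X φ) (hX : 0 ≤ X) (ha : 0 ≤ a)
    (hθ : 0 < Real.cos θ) (hφ : Real.sin θ * Real.cos φ ≤ Real.sin φ * Real.cos θ) :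
    SlopeLE (addSlope U X θ a) (X + a * Real.cos θ) φ := by
  intro x y hx hxy hy
  set b := a * Real.cos θ
  have hb : 0 ≤ b := by positivity
  have h1 := hs (max (x - b) (-X)) (max (y - b) (-X)) (le_max_right _ _)
    (max_le_max_right _ (by linarith)) (max_le (by linarith) (by linarith))
  have h2 : min (x - b) (-X) ≤ min (y - b) (-X) := min_le_min_right _ (by linarith)
  have h3 : Real.cos φ * Real.tan θ ≤ Real.sin φ := by
    rw [Real.tan_eq_sin_div_cos, mul_div_assoc', div_le_iff₀ hθ]
    linarith
  have h4 := mul_le_mul_of_nonneg_right h3 (sub_nonneg.2 h2)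
  have h5 := max_add_min (x - b) (-X)
  have h6 := max_add_min (y - b) (-X)
  simp only [_root_.addSlope]
  linear_combination h1 + h4 + Real.sin φ * (h6 - h5)

theorem UpperProfile.add_vertical (hU : UpperProfile K X U) (hθ : Real.cos θ = 0)
    (hθ' : Real.sin θ = 1) (ha : 0 ≤ a) :
    UpperProfile (K + segment ℝ (-(a • unitVec θ)) (a • unitVec θ)) X (fun x => U x + a) where
  nonneg := hU.nonneg
  cont := by have := hU.cont; fun_prop
  abs_re_le := by
    rintro _ ⟨k, hk, z, hz, rfl⟩
    obtain ⟨t, ht, rfl⟩ := (mem_segment_neg_iff ha).1 hz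
    simpa [unitVec, hθ] using hU.abs_re_le k hk
  mem x hx := by
    refine ⟨_, hU.mem x hx, a • unitVec θ,
      (mem_segment_neg_iff ha).2 ⟨_, (abs_of_nonneg ha).le, rfl⟩, ?_⟩
    apply Complex.ext <;> simp [unitVec, hθ, hθ']
  le := by
    rintro _ ⟨k, hk, z, hz, rfl⟩
    obtain ⟨t, ht, rfl⟩ := (mem_segment_neg_iff ha).1 hz
    have h1 := hU.le k hk
    have h2 := (abs_le.1 ht).2
    simp [unitVec, hθ, hθ']
    linarith

theorem integral_addSlope (hU : Continuous U) (hX : 0 ≤ X) (ha : 0 ≤ a) (hθ : 0 < Real.cos θ)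
    (p q : ℝ) :
    ∫ x in -(X + a * Real.cos θ)..(X + a * Real.cos θ),
      ((x + p) ^ 2 + (addSlope U X θ a x + q) ^ 2) =
    (∫ x in -X..X, ((x + (p + a * Real.cos θ)) ^ 2 + (U x + (q + a * Real.sin θ)) ^ 2)) +
      Real.cos θ * (2 * a * ((-X + p) ^ 2 + (U (-X) + q) ^ 2) + 2 / 3 * a ^ 3) := by
  set b := a * Real.cos θ
  have hb0 : 0 ≤ b := by positivity
  have hcont : Continuous (addSlope U X θ a) := by unfold addSlope; fun_prop
  rw [← intervalIntegral.integral_add_adjacent_intervals (b := -X + b)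
    (Continuous.intervalIntegrable (by fun_prop) _ _)
    (Continuous.intervalIntegrable (by fun_prop) _ _), add_comm]
  congr 1
  · have h1 : ∫ x in -X + b..X + b, ((x + p) ^ 2 + (addSlope U X θ a x + q) ^ 2) =
        ∫ x in -X + b..X + b, (((x - b) + (p + b)) ^ 2 +
          (U (x - b) + (q + a * Real.sin θ)) ^ 2) := by
      refine intervalIntegral.integral_congr fun x hx => ?_
      rw [Set.uIcc_of_le (by linarith)] at hx
      rw [addSlope_of_ge hx.1]
      ring
    rw [h1, intervalIntegral.integral_comp_sub_right
      (fun x => (x + (p + b)) ^ 2 + (U x + (q + a * Real.sin θ)) ^ 2)]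
    simp
  · have h1 : ∫ x in -(X + b)..-X + b, ((x + p) ^ 2 + (addSlope U X θ a x + q) ^ 2) =
        ∫ x in -(X + b)..-X + b, (fun τ => ((-X + p) ^ 2 + (U (-X) + q) ^ 2) +
          2 * ((-X + p) + (U (-X) + q) * Real.tan θ) * τ + (1 + Real.tan θ ^ 2) * τ ^ 2)
          (x + X) := by
      refine intervalIntegral.integral_congr fun x hx => ?_
      rw [Set.uIcc_of_le (by linarith)] at hx
      simp only
      rw [addSlope_of_le hθ hx.2]
      ring
    rw [h1, intervalIntegral.integral_comp_add_right (fun τ => ((-X + p) ^ 2 + (U (-X) + q) ^ 2) +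
          2 * ((-X + p) + (U (-X) + q) * Real.tan θ) * τ + (1 + Real.tan θ ^ 2) * τ ^ 2),
      intervalIntegral.integral_add (Continuous.intervalIntegrable (by fun_prop) _ _)
        (Continuous.intervalIntegrable (by fun_prop) _ _),
      intervalIntegral.integral_add (Continuous.intervalIntegrable (by fun_prop) _ _)
        (Continuous.intervalIntegrable (by fun_prop) _ _)]
    rw [intervalIntegral.integral_const_mul _ fun τ => τ]
    simp only [intervalIntegral.integral_const, intervalIntegral.integral_const_mul, integral_id,
      integral_pow, smul_eq_mul]
    have h2 : (1 + Real.tan θ ^ 2) * Real.cos θ ^ 2 = 1 := by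
      rw [Real.tan_eq_sin_div_cos]
      field_simp
      exact Real.cos_sq_add_sin_sq θ
    push_cast
    linear_combination (2 / 3 * a ^ 3 * Real.cos θ) * h2

end addSlope

theorem UpperProfile.mem_iff {K : Set ℂ} {X : ℝ} {U : ℝ → ℝ} (hU : UpperProfile K X U)
    (hK : Convex ℝ K) (hneg : -K = K) (x y : ℝ) :
    (⟨x, y⟩ : ℂ) ∈ K ↔ x ∈ Set.Icc (-X) X ∧ y ∈ Set.Icc (-U (-x)) (U x) := by
  have neg_mem : ∀ z ∈ K, -z ∈ K := fun z hz => by rw [← hneg]; simpa using hz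
  constructor
  · intro h
    refine ⟨abs_le.1 (hU.abs_re_le _ h), ?_, hU.le _ h⟩
    have := hU.le _ (neg_mem _ h)
    simp only [Complex.neg_re, Complex.neg_im] at this
    linarith
  · rintro ⟨hx, hy⟩
    have h1 := hU.mem x (abs_le.2 hx)
    have h2 := neg_mem _ (hU.mem (-x) (by rw [abs_neg]; exact abs_le.2 hx))
    rcases (hy.1.trans hy.2).eq_or_lt with h | h
    · rwa [le_antisymm hy.2 (h ▸ hy.1)]
    · have hd : U x + U (-x) ≠ 0 := by linarith
      have := hK h2 h1 (a := (U x - y) / (U x + U (-x))) (b := (y + U (-x)) / (U x + U (-x)))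
        (div_nonneg (by linarith [hy.2]) (by linarith))
        (div_nonneg (by linarith [hy.1]) (by linarith)) (by field_simp; ring)
      convert this using 1
      apply Complex.ext
      · simp [Complex.real_smul, -Complex.ofReal_div, -Complex.ofReal_add, -Complex.ofReal_sub]
        field_simp
        ring
      · simp [Complex.real_smul, -Complex.ofReal_div, -Complex.ofReal_add, -Complex.ofReal_sub]
        field_simp
        ring

theorem UpperProfile.setIntegral_eq {K : Set ℂ} {X : ℝ} {U : ℝ → ℝ} (hU : UpperProfile K X U)
    (hK : Convex ℝ K) (hneg : -K = K) (hc : IsCompact K) {f : ℂ → ℝ} (hf : Continuous f) :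
    ∫ z in K, f z = ∫ x in -X..X, ∫ y in -U (-x)..U x, f ⟨x, y⟩ := by
  have hint : Integrable (K.indicator f) volume :=
    (integrable_indicator_iff hc.measurableSet).2 (hf.continuousOn.integrableOn_compact hc)
  have hmp := Complex.volume_preserving_equiv_real_prod.symm
  rw [← integral_indicator hc.measurableSet, ← hmp.integral_comp']
  have hint' := (hmp.integrable_comp_emb (MeasurableEquiv.measurableEmbedding _)).2 hint
  rw [Measure.volume_eq_prod] at hint' ⊢
  refine (integral_prod _ hint').trans ?_
  rw [intervalIntegral.integral_of_le (by linarith [hU.nonneg]),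
    ← integral_Icc_eq_integral_Ioc, ← integral_indicator measurableSet_Icc]
  congr 1
  ext x
  by_cases hx : x ∈ Set.Icc (-X) X
  · have h0 : (⟨x, U x⟩ : ℂ) ∈ K := hU.mem x (abs_le.2 hx)
    have h1 := ((hU.mem_iff hK hneg _ _).1 h0).2.1
    rw [Set.indicator_of_mem hx, intervalIntegral.integral_of_le h1,
      ← integral_Icc_eq_integral_Ioc, ← integral_indicator measurableSet_Icc]
    congr 1
    ext y
    by_cases hy : y ∈ Set.Icc (-U (-x)) (U x)
    · rw [Set.indicator_of_mem hy]
      exact Set.indicator_of_mem ((hU.mem_iff hK hneg _ _).2 ⟨hx, hy⟩) _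
    · rw [Set.indicator_of_notMem hy]
      exact Set.indicator_of_notMem (fun h => hy ((hU.mem_iff hK hneg _ _).1 h).2) _
  · rw [Set.indicator_of_notMem hx]
    refine integral_eq_zero_of_ae (Filter.Eventually.of_forall fun y => ?_)
    exact Set.indicator_of_notMem (fun h => hx ((hU.mem_iff hK hneg _ _).1 h).1) _

theorem UpperProfile.setIntegral_one {K : Set ℂ} {X : ℝ} {U : ℝ → ℝ} (hU : UpperProfile K X U)
    (hK : Convex ℝ K) (hneg : -K = K) (hc : IsCompact K) :
    ∫ _z in K, (1 : ℝ) = 2 * ∫ x in -X..X, U x := by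
  have hcont := hU.cont
  rw [hU.setIntegral_eq hK hneg hc continuous_const]
  simp only [intervalIntegral.integral_const, smul_eq_mul, mul_one, sub_neg_eq_add]
  rw [intervalIntegral.integral_add (Continuous.intervalIntegrable (by fun_prop) _ _)
    (Continuous.intervalIntegrable (by fun_prop) _ _), intervalIntegral.integral_comp_neg]
  simp only [neg_neg]
  ring

theorem UpperProfile.setIntegral_norm_sq {K : Set ℂ} {X : ℝ} {U : ℝ → ℝ}
    (hU : UpperProfile K X U) (hK : Convex ℝ K) (hneg : -K = K) (hc : IsCompact K) :
    ∫ z in K, ‖z‖ ^ 2 = 2 * ∫ x in -X..X, (x ^ 2 * U x + U x ^ 3 / 3) := by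
  have hcont := hU.cont
  rw [hU.setIntegral_eq hK hneg hc (by fun_prop)]
  have h : ∀ x : ℝ, ∫ y in -U (-x)..U x, ‖(⟨x, y⟩ : ℂ)‖ ^ 2 =
      (x ^ 2 * U x + U x ^ 3 / 3) + ((-x) ^ 2 * U (-x) + U (-x) ^ 3 / 3) := fun x => by
    simp only [← Complex.normSq_eq_norm_sq, Complex.normSq_mk, ← pow_two]
    rw [intervalIntegral.integral_add (Continuous.intervalIntegrable (by fun_prop) _ _)
      (Continuous.intervalIntegrable (by fun_prop) _ _), integral_pow]
    simp only [intervalIntegral.integral_const, smul_eq_mul]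
    push_cast
    ring
  simp only [h]
  rw [intervalIntegral.integral_add (Continuous.intervalIntegrable (by fun_prop) _ _)
    (Continuous.intervalIntegrable (by fun_prop) _ _),
    intervalIntegral.integral_comp_neg fun x => x ^ 2 * U x + U x ^ 3 / 3]
  simp only [neg_neg]
  ring

/-- The sign telling whether `k` comes after or before `j`. -/
def orderSign {m : ℕ} (j k : Fin m) : ℝ := if j < k then 1 else if k < j then -1 else 0

/-- The midpoint of the edge with index `j` of the upper boundary of `zonotope θ l`, the indices
decreasing from left to right. -/
noncomputable def edgeMid {m : ℕ} (θ l : Fin m → ℝ) (j : Fin m) : ℂ :=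
  ∑ k, (orderSign j k * l k) • unitVec (θ k)

theorem edgeMid_castSucc {m : ℕ} (θ l : Fin (m + 1) → ℝ) (j : Fin m) :
    edgeMid θ l j.castSucc = edgeMid (fun i => θ i.castSucc) (fun i => l i.castSucc) j +
      l (Fin.last m) • unitVec (θ (Fin.last m)) := by
  simp [edgeMid, Fin.sum_univ_castSucc, orderSign, Fin.castSucc_lt_last]

theorem edgeMid_last {m : ℕ} (θ l : Fin (m + 1) → ℝ) :
    edgeMid θ l (Fin.last m) = -∑ k : Fin m, l k.castSucc • unitVec (θ k.castSucc) := by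
  have h (k : Fin m) : ¬Fin.last m < k.castSucc := (Fin.castSucc_lt_last k).not_gt
  simp [edgeMid, Fin.sum_univ_castSucc, orderSign, Fin.castSucc_lt_last, h]

theorem exists_upperProfile_zonotope {m : ℕ} (θ l : Fin m → ℝ) (hmono : Monotone θ)
    (h1 : ∀ i, -(Real.pi / 2) < θ i) (h2 : ∀ i, θ i ≤ Real.pi / 2) (hl : ∀ i, 0 ≤ l i) :
    ∃ U : ℝ → ℝ, UpperProfile (zonotope θ l) (∑ i, l i * Real.cos (θ i)) U ∧
      ((∀ i, θ i < Real.pi / 2) →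
        U (-∑ i, l i * Real.cos (θ i)) = -∑ i, l i * Real.sin (θ i)) ∧
      (∀ φ, (∀ i, θ i ≤ φ) → φ ≤ Real.pi / 2 → SlopeLE U (∑ i, l i * Real.cos (θ i)) φ) ∧
      ∀ p q : ℝ, ∫ x in -(∑ i, l i * Real.cos (θ i))..(∑ i, l i * Real.cos (θ i)),
          ((x + p) ^ 2 + (U x + q) ^ 2) =
        ∑ j, Real.cos (θ j) * (2 * l j * (((edgeMid θ l j).re + p) ^ 2 +
          ((edgeMid θ l j).im + q) ^ 2) + 2 / 3 * l j ^ 3) := by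
  induction m with
  | zero =>
    refine ⟨fun _ => 0, ⟨by simp, continuous_const, ?_, ?_, ?_⟩, by simp, ?_, by simp⟩
    · simp [zonotope]
    · intro x hx
      obtain rfl : x = 0 := by simpa using hx
      simp only [zonotope, Finset.univ_eq_empty, Finset.sum_empty]
      rfl
    · simp [zonotope]
    · intro φ _ _ x y hx hxy hy
      simp only [Finset.univ_eq_empty, Finset.sum_empty, neg_zero] at hx hy
      obtain rfl : x = 0 := by linarith
      obtain rfl : y = 0 := by linarith
      simp
  | succ m ih =>
    obtain ⟨U, hU, hleft, hslope, hint⟩ := ih (fun i => θ i.castSucc) (fun i => l i.castSucc)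
      (fun i j h => hmono (by simpa using h)) (fun i => h1 _) (fun i => h2 _) (fun i => hl _)
    have hlast : ∀ i : Fin m, θ i.castSucc ≤ θ (Fin.last m) := fun i => hmono (Fin.le_last _)
    have hcos : 0 ≤ Real.cos (θ (Fin.last m)) :=
      Real.cos_nonneg_of_mem_Icc ⟨(h1 _).le, h2 _⟩
    have hX := hU.nonneg
    rw [zonotope_succ]
    simp only [Fin.sum_univ_castSucc, edgeMid_castSucc, edgeMid_last]
    set X := ∑ i : Fin m, l i.castSucc * Real.cos (θ i.castSucc)
    set a := l (Fin.last m)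
    set α := θ (Fin.last m)
    have ha : 0 ≤ a := hl _
    have hre : (∑ k : Fin m, l k.castSucc • unitVec (θ k.castSucc)).re = X := by
      simp [unitVec, X]
    have him : (∑ k : Fin m, l k.castSucc • unitVec (θ k.castSucc)).im =
        ∑ i : Fin m, l i.castSucc * Real.sin (θ i.castSucc) := by
      simp [unitVec]
    have hre' : (a • unitVec α).re = a * Real.cos α := by simp [unitVec]
    have him' : (a • unitVec α).im = a * Real.sin α := by simp [unitVec]
    simp only [Complex.add_re, Complex.add_im, Complex.neg_re, Complex.neg_im, hre, him, hre',
      him']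
    rcases hcos.eq_or_lt with hc | hc
    · have hα : α = Real.pi / 2 := by
        by_contra hne
        exact (Real.cos_pos_of_mem_Ioo ⟨h1 _, lt_of_le_of_ne (h2 _) hne⟩).ne hc
      have hs : Real.sin α = 1 := by rw [hα, Real.sin_pi_div_two]
      simp only [← hc, hs, mul_zero, add_zero, zero_mul, mul_one]
      refine ⟨_, hU.add_vertical hc.symm hs ha, ?_, ?_, ?_⟩
      · exact fun h => absurd hα (h _).ne
      · intro φ hφ hφ' x y hx hxy hy
        have := hslope φ (fun i => hφ _) hφ' x y hx hxy hy
        simpa using this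
      · intro p q
        simp only [add_assoc, add_comm a q]
        simpa only [add_comm a q] using hint p (q + a)
    · have hα : α < Real.pi / 2 := by
        refine lt_of_le_of_ne (h2 _) fun h => hc.ne' ?_
        rw [h, Real.cos_pi_div_two]
      replace hleft := hleft fun i => (hlast i).trans_lt hα
      refine ⟨_, hU.add_slope hc (hslope α hlast (h2 _)) ha, ?_, ?_, ?_⟩
      · intro _
        rw [addSlope_of_le hc (by nlinarith), hleft]
        linear_combination -a * Real.tan_mul_cos hc.ne'
      · intro φ hφ hφ'
        refine (hslope φ (fun i => hφ _) hφ').addSlope hX ha hc ?_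
        have : 0 ≤ Real.sin (φ - α) := Real.sin_nonneg_of_nonneg_of_le_pi
          (sub_nonneg.2 (hφ _)) (by linarith [h1 (Fin.last m)])
        rw [Real.sin_sub] at this
        linarith
      · intro p q
        rw [integral_addSlope hU.cont hX ha hc, hint, hleft]
        simp only [add_assoc, add_comm p, add_comm q]

theorem image_sum_segment_neg {E F ι : Type*} [NormedAddCommGroup E] [NormedSpace ℝ E]
    [NormedAddCommGroup F] [NormedSpace ℝ F] (L : E ≃ₗᵢ[ℝ] F) (s : Finset ι) (v : ι → E) :
    L '' ∑ i ∈ s, segment ℝ (-v i) (v i) = ∑ i ∈ s, segment ℝ (-L (v i)) (L (v i)) := by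
  rw [Set.image_finsetSum]
  refine Finset.sum_congr rfl fun i _ => ?_
  have h := image_segment ℝ (L.toLinearEquiv.toLinearMap.toAffineMap) (-v i) (v i)
  simpa using h

theorem setIntegral_image_norm_sq {E F : Type*} [NormedAddCommGroup E] [InnerProductSpace ℝ E]
    [FiniteDimensional ℝ E] [MeasurableSpace E] [BorelSpace E] [NormedAddCommGroup F]
    [InnerProductSpace ℝ F] [FiniteDimensional ℝ F] [MeasurableSpace F] [BorelSpace F]
    (L : E ≃ₗᵢ[ℝ] F) (K : Set E) : ∫ z in L '' K, ‖z‖ ^ 2 = ∫ z in K, ‖z‖ ^ 2 := by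
  rw [L.measurePreserving.setIntegral_image_emb L.toHomeomorph.measurableEmbedding]
  simp

theorem setIntegral_image_one {E F : Type*} [NormedAddCommGroup E] [InnerProductSpace ℝ E]
    [FiniteDimensional ℝ E] [MeasurableSpace E] [BorelSpace E] [NormedAddCommGroup F]
    [InnerProductSpace ℝ F] [FiniteDimensional ℝ F] [MeasurableSpace F] [BorelSpace F]
    (L : E ≃ₗᵢ[ℝ] F) (K : Set E) : ∫ _z in L '' K, (1 : ℝ) = ∫ _z in K, (1 : ℝ) := by
  rw [L.measurePreserving.setIntegral_image_emb L.toHomeomorph.measurableEmbedding]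

theorem unitVec_add (θ α : ℝ) : unitVec (θ + α) = rotation (Circle.exp α) (unitVec θ) := by
  rw [rotation_apply, Circle.coe_exp]
  apply Complex.ext <;>
  simp only [unitVec, Complex.mul_re, Complex.mul_im, Complex.exp_ofReal_mul_I_re,
    Complex.exp_ofReal_mul_I_im, Real.cos_add, Real.sin_add] <;> ring

theorem zonotope_add_const {m : ℕ} (θ l : Fin m → ℝ) (α : ℝ) :
    zonotope (fun i => θ i + α) l = rotation (Circle.exp α) '' zonotope θ l := by
  rw [zonotope, zonotope, image_sum_segment_neg]
  simp only [unitVec_add, map_smul]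

theorem setIntegral_zonotope_vertical {m : ℕ} (θ l : Fin m → ℝ) (hmono : Monotone θ)
    (h1 : ∀ i, -(Real.pi / 2) < θ i) (h2 : ∀ i, θ i ≤ Real.pi / 2) (hl : ∀ i, 0 ≤ l i)
    {α a : ℝ} (hα : α = Real.pi / 2) (ha : 0 ≤ a) :
    (∫ _z in zonotope θ l + segment ℝ (-(a • unitVec α)) (a • unitVec α), (1 : ℝ)) =
      (∫ _z in zonotope θ l, (1 : ℝ)) + 4 * a * ∑ i, l i * Real.cos (θ i) ∧
    (∫ z in zonotope θ l + segment ℝ (-(a • unitVec α)) (a • unitVec α), ‖z‖ ^ 2) =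
      (∫ z in zonotope θ l, ‖z‖ ^ 2) + a ^ 2 * (∫ _z in zonotope θ l, (1 : ℝ)) +
      2 * a * ∑ j, Real.cos (θ j) * (2 * l j * ‖edgeMid θ l j‖ ^ 2 + 2 / 3 * l j ^ 3) +
      4 / 3 * a ^ 3 * ∑ i, l i * Real.cos (θ i) := by
  obtain ⟨U, hU, -, -, hint⟩ := exists_upperProfile_zonotope θ l hmono h1 h2 hl
  have hcont := hU.cont
  have hV := hU.add_vertical (θ := α) (by rw [hα, Real.cos_pi_div_two])
    (by rw [hα, Real.sin_pi_div_two]) ha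
  have hJ := hint 0 0
  simp only [add_zero] at hJ
  have hz := zonotope_succ (Fin.snoc θ α : Fin (m + 1) → ℝ) (Fin.snoc l a : Fin (m + 1) → ℝ)
  simp only [Fin.snoc_castSucc, Fin.snoc_last] at hz
  rw [← hz] at hV ⊢
  rw [hV.setIntegral_one (convex_zonotope _ _) (neg_zonotope _ _) (isCompact_zonotope _ _),
    hU.setIntegral_one (convex_zonotope _ _) (neg_zonotope _ _) (isCompact_zonotope _ _),
    hV.setIntegral_norm_sq (convex_zonotope _ _) (neg_zonotope _ _) (isCompact_zonotope _ _),
    hU.setIntegral_norm_sq (convex_zonotope _ _) (neg_zonotope _ _) (isCompact_zonotope _ _)]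
  have hi {f : ℝ → ℝ} (hf : Continuous f) (b c : ℝ) : IntervalIntegrable f volume b c :=
    hf.intervalIntegrable b c
  simp only [← Complex.normSq_eq_norm_sq, Complex.normSq_apply, ← pow_two]
  rw [← hJ]
  constructor
  · rw [intervalIntegral.integral_add (hi (by fun_prop) _ _) (hi (by fun_prop) _ _),
      intervalIntegral.integral_const, smul_eq_mul]
    ring
  · have h : ∀ x, x ^ 2 * (U x + a) + (U x + a) ^ 3 / 3 =
        (x ^ 2 * U x + U x ^ 3 / 3) + a * (x ^ 2 + U x ^ 2) + a ^ 2 * U x + a ^ 3 / 3 :=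
      fun x => by ring
    simp only [h]
    rw [intervalIntegral.integral_add (hi (by fun_prop) _ _) (hi (by fun_prop) _ _),
      intervalIntegral.integral_add (hi (by fun_prop) _ _) (hi (by fun_prop) _ _),
      intervalIntegral.integral_add (hi (by fun_prop) _ _) (hi (by fun_prop) _ _),
      intervalIntegral.integral_const_mul, intervalIntegral.integral_const_mul,
      intervalIntegral.integral_const, smul_eq_mul]
    ring

/-- The coefficient of `l j * l k * l n` in the `j`-th term of
`∑ j, l j * cos (θ j) * ‖edgeMid θ l j‖ ^ 2`. -/
noncomputable def edgeCoeff {m : ℕ} (θ : Fin m → ℝ) (j k n : Fin m) : ℝ :=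
  Real.cos (θ j) * (orderSign j k * orderSign j n * Real.cos (θ k - θ n))

theorem cos_mul_norm_edgeMid_sq {m : ℕ} (θ l : Fin m → ℝ) (j : Fin m) :
    Real.cos (θ j) * ‖edgeMid θ l j‖ ^ 2 = ∑ k, ∑ n, edgeCoeff θ j k n * (l k * l n) := by
  have hre : (edgeMid θ l j).re = ∑ k, orderSign j k * l k * Real.cos (θ k) := by
    simp [edgeMid, unitVec]
  have him : (edgeMid θ l j).im = ∑ k, orderSign j k * l k * Real.sin (θ k) := by
    simp [edgeMid, unitVec]
  rw [← Complex.normSq_eq_norm_sq, Complex.normSq_apply, hre, him, Finset.sum_mul_sum,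
    Finset.sum_mul_sum, ← Finset.sum_add_distrib, Finset.mul_sum]
  refine Finset.sum_congr rfl fun k _ => ?_
  rw [← Finset.sum_add_distrib, Finset.mul_sum]
  refine Finset.sum_congr rfl fun n _ => ?_
  rw [edgeCoeff, Real.cos_sub]
  ring

theorem edgeCoeff_comm {m : ℕ} (θ : Fin m → ℝ) (j k n : Fin m) :
    edgeCoeff θ j k n = edgeCoeff θ j n k := by
  rw [edgeCoeff, edgeCoeff, ← Real.cos_neg (θ k - θ n), neg_sub]
  ring

/-- The mixed coefficient of three segments, up to normalisation. -/
noncomputable def mixedCoeff {m : ℕ} (θ : Fin m → ℝ) (j k n : Fin m) : ℝ :=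
  edgeCoeff θ j k n + edgeCoeff θ k n j + edgeCoeff θ n j k

theorem mixedCoeff_rotate {m : ℕ} (θ : Fin m → ℝ) (j k n : Fin m) :
    mixedCoeff θ j k n = mixedCoeff θ k n j := by
  unfold mixedCoeff
  ring

theorem mixedCoeff_swap {m : ℕ} (θ : Fin m → ℝ) (j k n : Fin m) :
    mixedCoeff θ j k n = mixedCoeff θ j n k := by
  unfold mixedCoeff
  rw [edgeCoeff_comm θ j k, edgeCoeff_comm θ k n, edgeCoeff_comm θ n j]
  ring

theorem mixedCoeff_nonneg_of_le {m : ℕ} {θ : Fin m → ℝ} (hmono : Monotone θ)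
    (h1 : ∀ i, -(Real.pi / 2) < θ i) (h2 : ∀ i, θ i ≤ Real.pi / 2) {j k n : Fin m}
    (hjk : j ≤ k) (hkn : k ≤ n) : 0 ≤ mixedCoeff θ j k n := by
  have hcos (i : Fin m) : 0 ≤ Real.cos (θ i) := Real.cos_nonneg_of_mem_Icc ⟨(h1 _).le, h2 _⟩
  rcases hjk.eq_or_lt with rfl | hjk
  · have h : orderSign j j = 0 := by simp [orderSign]
    simp only [mixedCoeff, edgeCoeff, h, sub_self, Real.cos_zero]
    have := mul_nonneg (hcos n) (mul_self_nonneg (orderSign n j))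
    simpa using this
  · rcases hkn.eq_or_lt with rfl | hkn
    · have h : orderSign k k = 0 := by simp [orderSign]
      simp only [mixedCoeff, edgeCoeff, h, sub_self, Real.cos_zero]
      have := mul_nonneg (hcos j) (mul_self_nonneg (orderSign j k))
      simpa using this
    · have hjn := hjk.trans hkn
      have h : mixedCoeff θ j k n = Real.cos (θ n - θ k + θ j) := by
        simp only [mixedCoeff, edgeCoeff, orderSign, hjk, hkn, hjn, hjk.not_gt, hkn.not_gt,
          hjn.not_gt, if_true, if_false, Real.cos_add, Real.cos_sub, Real.sin_sub]
        ring
      rw [h]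
      exact Real.cos_nonneg_of_mem_Icc ⟨by linarith [h1 j, hmono hkn.le],
        by linarith [h2 n, hmono hjk.le]⟩

theorem mixedCoeff_nonneg {m : ℕ} {θ : Fin m → ℝ} (hmono : Monotone θ)
    (h1 : ∀ i, -(Real.pi / 2) < θ i) (h2 : ∀ i, θ i ≤ Real.pi / 2) (j k n : Fin m) :
    0 ≤ mixedCoeff θ j k n := by
  have key {j k n : Fin m} (hjk : j ≤ k) (hkn : k ≤ n) :=
    mixedCoeff_nonneg_of_le hmono h1 h2 hjk hkn
  rcases le_total j k with a | a <;> rcases le_total k n with b | b <;>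
    rcases le_total j n with c | c
  · exact key a b
  · exact key a b
  · rw [mixedCoeff_swap]; exact key c b
  · rw [mixedCoeff_rotate, mixedCoeff_rotate]; exact key c a
  · rw [mixedCoeff_rotate, mixedCoeff_swap]; exact key a c
  · rw [mixedCoeff_rotate]; exact key b c
  · rw [mixedCoeff_rotate, mixedCoeff_swap, mixedCoeff_rotate, mixedCoeff_rotate]
    exact key b a
  · rw [mixedCoeff_rotate, mixedCoeff_swap, mixedCoeff_rotate, mixedCoeff_rotate]
    exact key b a

theorem sum_edgeCoeff_eq {m : ℕ} (θ l : Fin m → ℝ) :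
    ∑ j, ∑ k, ∑ n, edgeCoeff θ j k n * (l j * l k * l n) =
      ∑ j, ∑ k, ∑ n, mixedCoeff θ j k n / 3 * (l j * l k * l n) := by
  have hr (f : Fin m → Fin m → Fin m → ℝ) :
      ∑ j, ∑ k, ∑ n, f j k n = ∑ j, ∑ k, ∑ n, f k n j := by
    rw [Finset.sum_comm (f := fun j k => ∑ n, f k n j)]
    exact Finset.sum_congr rfl fun j _ => Finset.sum_comm
  set f := fun j k n => edgeCoeff θ j k n * (l j * l k * l n) with hf
  have h1 := hr f
  have h2 := hr fun j k n => f k n j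
  have h3 : ∀ j k n, mixedCoeff θ j k n / 3 * (l j * l k * l n) =
      (1 / 3) * (f j k n + f k n j + f n j k) := fun j k n => by
    simp only [hf, mixedCoeff]
    ring
  simp only [h3, ← Finset.mul_sum, Finset.sum_add_distrib]
  change ∑ j, ∑ k, ∑ n, f j k n = _
  linarith

theorem isNonnegPoly_sum_edge {m : ℕ} {θ : Fin m → ℝ} (hmono : Monotone θ)
    (h1 : ∀ i, -(Real.pi / 2) < θ i) (h2 : ∀ i, θ i ≤ Real.pi / 2) :
    IsNonnegPoly fun l : Fin m → ℝ =>
      ∑ j, Real.cos (θ j) * (2 * l j * ‖edgeMid θ l j‖ ^ 2 + 2 / 3 * l j ^ 3) := by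
  have hcos (i : Fin m) : 0 ≤ Real.cos (θ i) := Real.cos_nonneg_of_mem_Icc ⟨(h1 _).le, h2 _⟩
  have h : IsNonnegPoly fun l : Fin m → ℝ =>
      2 * (∑ j, ∑ k, ∑ n, mixedCoeff θ j k n / 3 * (l j * l k * l n)) +
        ∑ j, Real.cos (θ j) * (2 / 3) * l j ^ 3 :=
    .add (.mul (.const (by norm_num)) (.sum fun j _ => .sum fun k _ => .sum fun n _ =>
      .mul (.const (div_nonneg (mixedCoeff_nonneg hmono h1 h2 j k n) (by norm_num)))
        (.mul (.mul (.coord j) (.coord k)) (.coord n))))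
      (.sum fun j _ => .mul (.const (mul_nonneg (hcos j) (by norm_num))) (.pow (.coord j) 3))
  refine h.congr fun l _ => ?_
  rw [← sum_edgeCoeff_eq, Finset.mul_sum, ← Finset.sum_add_distrib]
  refine Finset.sum_congr rfl fun j _ => ?_
  have e : ∑ k, ∑ n, edgeCoeff θ j k n * (l j * l k * l n) =
      l j * (Real.cos (θ j) * ‖edgeMid θ l j‖ ^ 2) := by
    rw [cos_mul_norm_edgeMid_sq]
    simp only [Finset.mul_sum]
    exact Finset.sum_congr rfl fun k _ => Finset.sum_congr rfl fun n _ => by ring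
  rw [e]
  ring

theorem isNonnegPoly_setIntegral_zonotope {m : ℕ} {θ : Fin m → ℝ} (hmono : Monotone θ)
    (hθ : ∀ i j, θ j - Real.pi < θ i) :
    IsNonnegPoly (fun l : Fin m → ℝ => ∫ _z in zonotope θ l, (1 : ℝ)) ∧
    IsNonnegPoly (fun l : Fin m → ℝ => ∫ z in zonotope θ l, ‖z‖ ^ 2) := by
  induction m with
  | zero =>
    have h (l : Fin 0 → ℝ) : volume (zonotope θ l) = 0 := by
      simp only [zonotope, Finset.univ_eq_empty, Finset.sum_empty]
      exact measure_singleton 0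
    constructor <;>
    exact (IsNonnegPoly.const le_rfl).congr fun l _ => setIntegral_measure_zero _ (h l)
  | succ m ih =>
    set α := Real.pi / 2 - θ (Fin.last m) with hα
    set θ' : Fin m → ℝ := fun i => θ i.castSucc + α
    have hmono' : Monotone θ' := fun i j hij =>
      add_le_add_left (hmono (Fin.castSucc_le_castSucc_iff.2 hij)) _
    have h1 (i : Fin m) : -(Real.pi / 2) < θ' i := by
      have := hθ i.castSucc (Fin.last m)
      simp only [θ', hα]
      linarith
    have h2 (i : Fin m) : θ' i ≤ Real.pi / 2 := by
      have := hmono (Fin.le_last i.castSucc)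
      simp only [θ', hα]
      linarith
    obtain ⟨ihV, ihM⟩ := ih hmono' fun i j => by
      have := hθ i.castSucc j.castSucc
      simp only [θ']
      linarith
    have hstep (l : Fin (m + 1) → ℝ) (hl : ∀ i, 0 ≤ l i) :=
      setIntegral_zonotope_vertical θ' (fun i => l i.castSucc) hmono' h1 h2
        (fun i => hl _) (show θ (Fin.last m) + α = _ by rw [hα]; ring) (hl (Fin.last m))
    have hrot (l : Fin (m + 1) → ℝ) := (zonotope_add_const θ l α).symm.trans (zonotope_succ _ _)
    have hinit (i : Fin m) : IsNonnegPoly fun l : Fin (m + 1) → ℝ => l i.castSucc := .coord _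
    have hlast : IsNonnegPoly fun l : Fin (m + 1) → ℝ => l (Fin.last m) := .coord _
    have hX : IsNonnegPoly fun l : Fin (m + 1) → ℝ => ∑ i, l i.castSucc * Real.cos (θ' i) :=
      .sum fun i _ => .mul (.coord _)
        (.const (Real.cos_nonneg_of_mem_Icc ⟨(h1 i).le, h2 i⟩))
    constructor
    · refine IsNonnegPoly.congr
        ((ihV.comp hinit).add (.mul (.mul (.const (by norm_num : (0 : ℝ) ≤ 4)) hlast) hX))
        fun l hl => ?_
      rw [← setIntegral_image_one (rotation (Circle.exp α)), hrot]
      exact (hstep l hl).1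
    · refine IsNonnegPoly.congr
        ((((ihM.comp hinit).add (.mul (hlast.pow 2) (ihV.comp hinit))).add
          (.mul (.mul (.const (by norm_num : (0 : ℝ) ≤ 2)) hlast)
            ((isNonnegPoly_sum_edge hmono' h1 h2).comp hinit))).add
          (.mul (.mul (.const (by norm_num : (0 : ℝ) ≤ 4 / 3)) (hlast.pow 3)) hX))
        fun l hl => ?_
      rw [← setIntegral_image_norm_sq (rotation (Circle.exp α)), hrot]
      exact (hstep l hl).2

theorem Complex.exists_eq_smul_unitVec (z : ℂ) :
    ∃ r θ : ℝ, 0 ≤ θ ∧ θ < Real.pi ∧ z = r • unitVec θ := by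
  rcases lt_or_ge (arg z) 0 with h | h
  · refine ⟨-‖z‖, arg z + Real.pi, by linarith [neg_pi_lt_arg z], by linarith, ?_⟩
    apply Complex.ext <;> simp [unitVec]
  rcases (arg_le_pi z).eq_or_lt with h' | h'
  · refine ⟨-‖z‖, 0, le_rfl, Real.pi_pos, ?_⟩
    apply Complex.ext
    · simpa [unitVec, h'] using (norm_mul_cos_arg z).symm
    · simpa [unitVec, h'] using (norm_mul_sin_arg z).symm
  · exact ⟨‖z‖, arg z, h, h', by apply Complex.ext <;> simp [unitVec]⟩

theorem segment_neg_abs_smul {E : Type*} [AddCommGroup E] [Module ℝ E] (r : ℝ) (e : E) :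
    segment ℝ (-(|r| • e)) (|r| • e) = segment ℝ (-(r • e)) (r • e) := by
  rcases abs_choice r with h | h <;> rw [h]
  rw [neg_smul, neg_neg, segment_symm]

/-- For a planar zonotope `K = Σ_{i=1}^m λ_i [−u_i, u_i]` (Minkowski sum of
centrally symmetric segments, `λ_i ≥ 0`), `∫_K |s|² ds` is a polynomial in `(λ₁,…,λ_m)`
with nonnegative coefficients. -/
theorem stmt19 (m : ℕ) (u : Fin m → EuclideanSpace ℝ (Fin 2)) :
    ∃ p : MvPolynomial (Fin m) ℝ, (∀ n, 0 ≤ MvPolynomial.coeff n p) ∧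
      ∀ lam : Fin m → ℝ, (∀ i, 0 ≤ lam i) →
        (∫ s in (∑ i, segment ℝ (-(lam i • u i)) (lam i • u i)), ‖s‖ ^ 2 ∂volume)
          = MvPolynomial.eval lam p := by
  let L : EuclideanSpace ℝ (Fin 2) ≃ₗᵢ[ℝ] ℂ := Complex.orthonormalBasisOneI.repr.symm
  choose r θ h0 hpi hr using fun i => Complex.exists_eq_smul_unitVec (L (u i))
  let σ := Tuple.sort θ
  have h := (isNonnegPoly_setIntegral_zonotope (Tuple.monotone_sort θ) fun i j => by
    have h1 := h0 (σ i)
    have h2 := hpi (σ j)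
    simp only [Function.comp_apply]
    linarith).2
  have h' := h.comp (σ := Fin m) (g := fun i lam => lam (σ i) * |r (σ i)|)
    fun i => .mul (.coord _) (.const (abs_nonneg _))
  refine h'.congr fun lam hlam => ?_
  rw [← setIntegral_image_norm_sq L, image_sum_segment_neg, zonotope,
    ← Equiv.sum_comp σ]
  congr 2
  refine Finset.sum_congr rfl fun i _ => ?_
  rw [map_smul, hr, smul_smul, ← segment_neg_abs_smul (lam (σ i) * r (σ i)), abs_mul,
    abs_of_nonneg (hlam _)]
  rfl
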